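/- arXiv:0804.0756 — 2 statements merged into one kernel-verified Lean document; each statement's English description precedes it below -/
import Mathlib

section
/- Let K be a field, S = K[x_1,...,x_n,y_1,...,y_m], 1 ≤ q ≤ n and 1 ≤ r ≤ m. Then the Alexander dual of I_q + J_r satisfies (I_q + J_r)^* = I_{n-q+1} · J_{m-r+1}; equivalently, the intersection of all ideals (x_{i_1},...,x_{i_q}) with 1 ≤ i_1 < ... < i_q ≤ n and all ideals (y_{j_1},...,y_{j_r}) with 1 ≤ j_1 < ... < j_r ≤ m equals the product of the ideal generated by all square-free monomials of degree n-q+1 in the x-variables with the ideal generated by all square-free monomials of degree m-r+1 in the y-variables. -/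
/-!
Everything is reduced to supports of monomials. A polynomial lies in an ideal generated by
square-free monomials `∏ i ∈ s, X i` exactly when the support of each of its exponents contains
one of the sets `s` (`mem_span_sqfree`); it lies in the ideal generated by the variables in `s`
exactly when the support of each of its exponents meets `s`.

Let `A` be the set of `x`-variables. A set `T` meets every `q`-element subset of `A` iff
`A \ T` has fewer than `q` elements, i.e. iff `T` contains `n - q + 1` elements of `A`
(`forall_meets_iff`). The same holds for the `y`-variables, and as the two blocks are disjoint, the
product `I_{n-q+1} · J_{m-r+1}` is generated by the square-free monomials on the unions of the
corresponding sets (`mem_Iq_mul_Jr`). This is the description of the intersection.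

For the Alexander dual, a square-free monomial lies in `I_q + J_r` iff its support contains
one of the generating sets, and enlarging `s` enlarges the ideal generated by its variables, so
the intersection may be restricted to the generators (`alexanderDual_Iq_add_Jr`).
-/

open MvPolynomial

/-- `Iq K n m q` is the ideal of `S = K[x_1,…,x_n,y_1,…,y_m]` (realized as the polynomial
ring on `Fin (n+m)`, the first `n` indices being the `x`-variables) generated by all
square-free monomials of degree `q` in the `x`-variables.  For `q = 0` it is the unit ideal. -/
noncomputable def Iq (K : Type) [Field K] (n m q : ℕ) : Ideal (MvPolynomial (Fin (n + m)) K) :=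
  Ideal.span {f | ∃ s : Finset (Fin (n + m)), (∀ i ∈ s, (i : ℕ) < n) ∧ s.card = q ∧
    f = ∏ i ∈ s, X i}

/-- `Jr K n m r` is the ideal of `S = K[x_1,…,x_n,y_1,…,y_m]` generated by all square-free
monomials of degree `r` in the `y`-variables (the last `m` indices of `Fin (n+m)`).
For `r = 0` it is the unit ideal. -/
noncomputable def Jr (K : Type) [Field K] (n m r : ℕ) : Ideal (MvPolynomial (Fin (n + m)) K) :=
  Ideal.span {f | ∃ s : Finset (Fin (n + m)), (∀ i ∈ s, n ≤ (i : ℕ)) ∧ s.card = r ∧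
    f = ∏ i ∈ s, X i}

/-- The Alexander dual of a square-free monomial ideal: the intersection of the ideals
generated by the variables in the support of each square-free monomial of `I`
(for a square-free monomial ideal this agrees with the intersection over a minimal
set of monomial generators). -/
noncomputable def alexanderDual {K : Type} [Field K] {N : ℕ}
    (I : Ideal (MvPolynomial (Fin N) K)) : Ideal (MvPolynomial (Fin N) K) :=
  ⨅ s ∈ {s : Finset (Fin N) | (∏ i ∈ s, X i) ∈ I},
    Ideal.span ((fun i => (X i : MvPolynomial (Fin N) K)) '' ↑s)

lemma prod_X_eq_monomial {σ K : Type*} [Field K] (s : Finset σ) :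
    (∏ i ∈ s, X i : MvPolynomial σ K) = monomial (∑ i ∈ s, Finsupp.single i 1) 1 := by
  rw [monomial_sum_one]
  rfl

lemma sum_single_apply {σ : Type*} [DecidableEq σ] (s : Finset σ) (i : σ) :
    (∑ j ∈ s, Finsupp.single j 1 : σ →₀ ℕ) i = if i ∈ s then 1 else 0 := by
  simp [Finsupp.finsetSum_apply, Finsupp.single_apply]

lemma sum_single_le_iff {σ : Type*} (s : Finset σ) (d : σ →₀ ℕ) :
    (∑ i ∈ s, Finsupp.single i 1) ≤ d ↔ s ⊆ d.support := by
  classical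
  constructor
  · intro h i hi
    have := h i
    rw [sum_single_apply, if_pos hi] at this
    rw [Finsupp.mem_support_iff]
    omega
  · intro h i
    rw [sum_single_apply]
    split_ifs with hi
    · exact Nat.one_le_iff_ne_zero.2 (Finsupp.mem_support_iff.1 (h hi))
    · exact Nat.zero_le _

lemma mem_span_sqfree {σ K : Type*} [Field K] (P : Finset σ → Prop) (f : MvPolynomial σ K) :
    f ∈ Ideal.span {g : MvPolynomial σ K | ∃ s, P s ∧ g = ∏ i ∈ s, X i} ↔
      ∀ d ∈ f.support, ∃ s, P s ∧ s ⊆ d.support := by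
  have : {g : MvPolynomial σ K | ∃ s, P s ∧ g = ∏ i ∈ s, X i} =
      (fun d => monomial d (1 : K)) '' {d | ∃ s, P s ∧ d = ∑ i ∈ s, Finsupp.single i 1} := by
    ext g
    constructor
    · rintro ⟨s, hs, rfl⟩
      exact ⟨_, ⟨s, hs, rfl⟩, (prod_X_eq_monomial s).symm⟩
    · rintro ⟨_, ⟨s, hs, rfl⟩, rfl⟩
      exact ⟨s, hs, (prod_X_eq_monomial s).symm⟩
  rw [this, mem_ideal_span_monomial_image]
  refine forall₂_congr fun d _ => ?_
  constructor
  · rintro ⟨_, ⟨s, hs, rfl⟩, hle⟩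
    exact ⟨s, hs, (sum_single_le_iff s d).1 hle⟩
  · rintro ⟨s, hs, hle⟩
    exact ⟨_, ⟨s, hs, rfl⟩, (sum_single_le_iff s d).2 hle⟩

lemma prod_X_mem_span_sqfree {σ K : Type*} [Field K] (P : Finset σ → Prop) (t : Finset σ) :
    (∏ i ∈ t, X i : MvPolynomial σ K) ∈
        Ideal.span {g : MvPolynomial σ K | ∃ s, P s ∧ g = ∏ i ∈ s, X i} ↔
      ∃ s, P s ∧ s ⊆ t := by
  classical
  have hsupp : (∑ i ∈ t, Finsupp.single i 1 : σ →₀ ℕ).support = t := by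
    ext i
    rw [Finsupp.mem_support_iff, sum_single_apply]
    simp
  rw [mem_span_sqfree, prod_X_eq_monomial, support_monomial, if_neg one_ne_zero]
  simp [hsupp]

lemma forall_meets_iff {α : Type*} (A T : Finset α) (q : ℕ) (hq : q ≤ A.card) :
    (∀ s ⊆ A, s.card = q → ∃ i ∈ s, i ∈ T) ↔ ∃ s ⊆ A, s.card = A.card - q + 1 ∧ s ⊆ T := by
  classical
  have hcard := Finset.card_sdiff_add_card_inter A T
  constructor
  · intro h
    have hlt : (A \ T).card < q := by
      by_contra! hle
      obtain ⟨s, hs, hsq⟩ := Finset.exists_subset_card_eq hle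
      obtain ⟨i, his, hiT⟩ := h s (hs.trans Finset.sdiff_subset) hsq
      exact (Finset.mem_sdiff.1 (hs his)).2 hiT
    obtain ⟨s, hs, hsq⟩ := Finset.exists_subset_card_eq
      (show A.card - q + 1 ≤ (A ∩ T).card by omega)
    exact ⟨s, hs.trans Finset.inter_subset_left, hsq, hs.trans Finset.inter_subset_right⟩
  · rintro ⟨t, htA, htc, htT⟩ s hsA hsq
    by_contra! hdisj
    have h1 := Finset.card_le_card
      (fun i hi => Finset.mem_sdiff.2 ⟨hsA hi, hdisj i hi⟩ : s ⊆ A \ T)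
    have h2 := Finset.card_le_card (Finset.subset_inter htA htT)
    omega

/-- A polynomial lies in every ideal generated by `q` variables from a block `A` iff the support of
each of its exponents contains `|A| - q + 1` elements of `A`. -/
lemma mem_iInf_span_X {σ K : Type*} [Field K] (A : Finset σ) (p : σ → Prop)
    (hA : ∀ i, i ∈ A ↔ p i) (q : ℕ) (hq : q ≤ A.card) (f : MvPolynomial σ K) :
    f ∈ (⨅ s ∈ {s : Finset σ | (∀ i ∈ s, p i) ∧ s.card = q},
        Ideal.span ((fun i => (X i : MvPolynomial σ K)) '' ↑s)) ↔
      ∀ d ∈ f.support, ∃ s : Finset σ, ((∀ i ∈ s, p i) ∧ s.card = A.card - q + 1) ∧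
        s ⊆ d.support := by
  have key (d : σ →₀ ℕ) := forall_meets_iff A d.support q hq
  simp only [Finset.subset_iff (s₂ := A), hA] at key
  simp only [Submodule.mem_iInf, Set.mem_ofPred_eq, and_assoc]
  constructor
  · intro h d hd
    refine (key d).1 fun s hs hsq => ?_
    obtain ⟨i, hi, hne⟩ := mem_ideal_span_X_image.1 (h s ⟨@hs, hsq⟩) d hd
    exact ⟨i, hi, Finsupp.mem_support_iff.2 hne⟩
  · intro h s hs
    refine mem_ideal_span_X_image.2 fun d hd => ?_
    obtain ⟨i, hi, hne⟩ := (key d).2 (h d hd) s (fun {_} hi => hs.1 _ hi) hs.2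
    exact ⟨i, hi, Finsupp.mem_support_iff.1 hne⟩

lemma mem_Iq_mul_Jr {K : Type} [Field K] (n m a b : ℕ) (f : MvPolynomial (Fin (n + m)) K) :
    f ∈ Iq K n m a * Jr K n m b ↔ ∀ d ∈ f.support,
      (∃ s : Finset (Fin (n + m)), ((∀ i ∈ s, (i : ℕ) < n) ∧ s.card = a) ∧ s ⊆ d.support) ∧
      (∃ t : Finset (Fin (n + m)), ((∀ i ∈ t, n ≤ (i : ℕ)) ∧ t.card = b) ∧ t ⊆ d.support) := by
  have hdisj (s t : Finset (Fin (n + m))) (hs : ∀ i ∈ s, (i : ℕ) < n)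
      (ht : ∀ i ∈ t, n ≤ (i : ℕ)) : Disjoint s t :=
    Finset.disjoint_left.2 fun i hi hi' => absurd (hs i hi) (not_lt.2 (ht i hi'))
  have hmul : Iq K n m a * Jr K n m b = Ideal.span {g | ∃ u : Finset (Fin (n + m)),
      (∃ s t : Finset (Fin (n + m)), ((∀ i ∈ s, (i : ℕ) < n) ∧ s.card = a) ∧
        ((∀ i ∈ t, n ≤ (i : ℕ)) ∧ t.card = b) ∧ u = s ∪ t) ∧ g = ∏ i ∈ u, X i} := by
    rw [Iq, Jr, Ideal.span_mul_span']
    congr 1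
    ext g
    rw [Set.mem_mul]
    constructor
    · rintro ⟨_, ⟨s, hs, hsa, rfl⟩, _, ⟨t, ht, htb, rfl⟩, rfl⟩
      exact ⟨s ∪ t, ⟨s, t, ⟨hs, hsa⟩, ⟨ht, htb⟩, rfl⟩,
        (Finset.prod_union (hdisj s t hs ht)).symm⟩
    · rintro ⟨_, ⟨s, t, ⟨hs, hsa⟩, ⟨ht, htb⟩, rfl⟩, rfl⟩
      exact ⟨_, ⟨s, hs, hsa, rfl⟩, _, ⟨t, ht, htb, rfl⟩,
        (Finset.prod_union (hdisj s t hs ht)).symm⟩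
  rw [hmul, mem_span_sqfree]
  refine forall₂_congr fun d _ => ?_
  constructor
  · rintro ⟨_, ⟨s, t, hs, ht, rfl⟩, hu⟩
    exact ⟨⟨s, hs, Finset.union_subset_left hu⟩, ⟨t, ht, Finset.union_subset_right hu⟩⟩
  · rintro ⟨⟨s, hs, hsd⟩, ⟨t, ht, htd⟩⟩
    exact ⟨_, ⟨s, t, hs, ht, rfl⟩, Finset.union_subset hsd htd⟩

lemma alexanderDual_Iq_add_Jr (K : Type) [Field K] (n m q r : ℕ) :
    alexanderDual (Iq K n m q + Jr K n m r) =
    (⨅ s ∈ {s : Finset (Fin (n + m)) | (∀ i ∈ s, (i : ℕ) < n) ∧ s.card = q},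
        Ideal.span ((fun i => (X i : MvPolynomial (Fin (n + m)) K)) '' ↑s)) ⊓
      (⨅ s ∈ {s : Finset (Fin (n + m)) | (∀ i ∈ s, n ≤ (i : ℕ)) ∧ s.card = r},
        Ideal.span ((fun i => (X i : MvPolynomial (Fin (n + m)) K)) '' ↑s)) := by
  have hsum : Iq K n m q + Jr K n m r = Ideal.span {g | ∃ s : Finset (Fin (n + m)),
      (((∀ i ∈ s, (i : ℕ) < n) ∧ s.card = q) ∨ ((∀ i ∈ s, n ≤ (i : ℕ)) ∧ s.card = r)) ∧
        g = ∏ i ∈ s, X i} := by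
    rw [Iq, Jr, Ideal.add_eq_sup, ← Ideal.span_union]
    congr 1
    ext g
    simp only [Set.mem_union, Set.mem_ofPred_eq, or_and_right, exists_or, and_assoc]
  have hmono {s t : Finset (Fin (n + m))} (h : s ⊆ t) :
      Ideal.span ((fun i => (X i : MvPolynomial (Fin (n + m)) K)) '' ↑s) ≤
        Ideal.span ((fun i => (X i : MvPolynomial (Fin (n + m)) K)) '' ↑t) :=
    Ideal.span_mono (Set.image_mono (Finset.coe_subset.2 h))
  rw [hsum, alexanderDual]
  simp only [prod_X_mem_span_sqfree]
  apply le_antisymm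
  · exact le_inf
      (le_iInf₂ fun s hs => iInf₂_le s ⟨s, Or.inl hs, Finset.Subset.refl s⟩)
      (le_iInf₂ fun s hs => iInf₂_le s ⟨s, Or.inr hs, Finset.Subset.refl s⟩)
  · refine le_iInf₂ fun t ht => ?_
    obtain ⟨s, hs | hs, hst⟩ := ht
    · exact inf_le_left.trans ((iInf₂_le s hs).trans (hmono hst))
    · exact inf_le_right.trans ((iInf₂_le s hs).trans (hmono hst))

/-- Proposition 2.3: `(I_q + J_r)^* = I_{n-q+1} · J_{m-r+1}`; equivalently, the intersection
of all ideals `(x_{i_1},…,x_{i_q})` and all ideals `(y_{j_1},…,y_{j_r})` equals the product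
of the ideal generated by all square-free monomials of degree `n-q+1` in the `x`-variables
with the ideal generated by all square-free monomials of degree `m-r+1` in the `y`-variables. -/
theorem alexanderDual_sum (K : Type) [Field K] (n m q r : ℕ)
    (hq1 : 1 ≤ q) (hqn : q ≤ n) (hr1 : 1 ≤ r) (hrm : r ≤ m) :
    alexanderDual (Iq K n m q + Jr K n m r) = Iq K n m (n - q + 1) * Jr K n m (m - r + 1) ∧
    (⨅ s ∈ {s : Finset (Fin (n + m)) | (∀ i ∈ s, (i : ℕ) < n) ∧ s.card = q},
        Ideal.span ((fun i => (X i : MvPolynomial (Fin (n + m)) K)) '' ↑s)) ⊓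
      (⨅ s ∈ {s : Finset (Fin (n + m)) | (∀ i ∈ s, n ≤ (i : ℕ)) ∧ s.card = r},
        Ideal.span ((fun i => (X i : MvPolynomial (Fin (n + m)) K)) '' ↑s)) =
      Iq K n m (n - q + 1) * Jr K n m (m - r + 1) := by
  rw [alexanderDual_Iq_add_Jr, and_self]
  have hx : (Finset.univ.filter fun i : Fin (n + m) => (i : ℕ) < n).card = n := by
    rw [Fin.card_filter_val_lt]
    omega
  have hy : (Finset.univ.filter fun i : Fin (n + m) => n ≤ (i : ℕ)).card = m := by
    have := Finset.card_filter_add_card_filter_not (s := Finset.univ)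
      (fun i : Fin (n + m) => (i : ℕ) < n)
    simp only [not_lt, Finset.card_univ, Fintype.card_fin] at this
    omega
  ext f
  rw [Submodule.mem_inf, mem_Iq_mul_Jr,
    mem_iInf_span_X _ (fun i : Fin (n + m) => (i : ℕ) < n) (fun i => Finset.mem_filter_univ i) q
      (hqn.trans_eq hx.symm),
    mem_iInf_span_X _ (fun i : Fin (n + m) => n ≤ (i : ℕ)) (fun i => Finset.mem_filter_univ i) r
      (hrm.trans_eq hy.symm), hx, hy]
  exact forall₂_and.symm
end

section
/- Let K be a field, S = K[x_1,...,x_n,y_1,...,y_m], and let 0 < q ≤ n and 0 < r ≤ m. Then the quotient ring S/(I_q J_r) is Cohen-Macaulay if and only if q = n and r = m, and in that case dim S/(I_n J_m) = m + n - 1. -/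
/-!
Put `L = I_q J_r`. Since `I_q` and `J_r` are monomial ideals in disjoint sets of variables,
`L = I_q ∩ J_r`, and the zero locus of `L` is the union of those of `I_q` and `J_r`, which are
unions of coordinate subspaces of dimensions `q - 1 + m` and `n + r - 1` meeting in dimension
`q + r - 2`. Hence `dim S/L` is at least both of `q - 1 + m` and `n + r - 1` (`le_dim_x`,
`le_dim_y`).

The depth is at most `q + r - 1` (`ringDepth_le`). Let `A` be the localization of `S/L` at the
origin, and `a`, `b` the images of `I_q`, `J_r`. These are nonzero and `a ∩ b = 0`, so the
projection `a ⊕ b → a` is a homomorphism `a + b → A` which is not multiplication by an element of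
`A`, as `A` is local; thus `Ext¹(A/(a + b), A) ≠ 0` (`hasExt_sup`). Ischebeck's theorem in the form
`Ext¹(A/c, M) ≠ 0 → depth M ≤ dim (A/c) + 1` (`HasExt.exists_coheight`) gives the bound. It is
proved by induction along a regular sequence: `c` may be replaced by a prime `p`; if the first
element `x` lies outside `p`, Nakayama's lemma passes from `(p, M)` to `(p + (x), M/xM)`; if `x`
lies in `p`, a nonzero element of `M/xM` killed by `p` appears, and the bound
`depth M ≤ dim (A/p)` for primes `p` annihilating a nonzero element
(`exists_coheight_of_annihilated`) applies.

If `S/L` is Cohen–Macaulay, then `q - 1 + m ≤ q + r - 1` and `n + r - 1 ≤ q + r - 1`, that is,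
`r = m` and `q = n`. Conversely, `I_n J_m` is generated by the product of all variables, so the
quotient has dimension `n + m - 1`, and the images of `X_0 - X_1, …, X_0 - X_{n+m-1}` form a
regular sequence (`exists_isRegularSeq`).
-/

open MvPolynomial

/-- `l : List R` is a regular sequence on `R`: each `l i` is a nonzerodivisor modulo the
ideal generated by the previous elements, and `l` generates a proper ideal. -/
def IsRegularSeq (R : Type) [CommRing R] (l : List R) : Prop :=
  (∀ (i : ℕ) (hi : i < l.length) (y : R),
      l.get ⟨i, hi⟩ * y ∈ Ideal.span {x | x ∈ l.take i} →
        y ∈ Ideal.span {x | x ∈ l.take i}) ∧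
  Ideal.span {x | x ∈ l} ≠ ⊤

/-- The depth of the ideal `J` on the ring `R`: the supremum of the lengths of regular
sequences on `R` consisting of elements of `J`. -/
noncomputable def ringDepth (R : Type) [CommRing R] (J : Ideal R) : ℕ∞ :=
  sSup {k : ℕ∞ | ∃ l : List R, (∀ x ∈ l, x ∈ J) ∧ IsRegularSeq R l ∧ (l.length : ℕ∞) = k}

/-- A (graded local) ring `R` with distinguished (irrelevant maximal) ideal `J` is
Cohen–Macaulay if `depth R = dim R`, the depth being taken with respect to `J`. -/
def IsCohenMacaulay (R : Type) [CommRing R] (J : Ideal R) : Prop :=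
  (ringDepth R J : WithBot ℕ∞) = ringKrullDim R

/-- The irrelevant maximal ideal of `S/L`, `S = K[x_1,…,x_N]`: the image in `S/L` of the
ideal generated by all the variables. -/
noncomputable def irrelevantMax (K : Type) [Field K] (N : ℕ)
    (L : Ideal (MvPolynomial (Fin N) K)) : Ideal (MvPolynomial (Fin N) K ⧸ L) :=
  Ideal.map (Ideal.Quotient.mk L) (Ideal.span (Set.range X))

/-! ### Regular sequences and `Ext¹` over a local ring -/

section LocalAlgebra

open RingTheory.Sequence Pointwise

variable {A : Type*} [CommRing A] {M : Type*} [AddCommGroup M] [Module A M]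

theorem quot_mk_eq_zero_iff (r : A) (m : M) :
    (Submodule.Quotient.mk m : QuotSMulTop r M) = 0 ↔ ∃ m', r • m' = m := by
  rw [Submodule.Quotient.mk_eq_zero, Submodule.mem_smul_pointwise_iff_exists]
  simp

/-- If some nonzero `z : M` is killed by the ideal `c` of a Noetherian local ring, then every
weakly `M`-regular sequence in the maximal ideal is no longer than some chain of primes starting
above `c`. -/
theorem exists_coheight_of_annihilated [IsNoetherianRing A] [IsLocalRing A] (rs : List A)
    (hrs : ∀ x ∈ rs, x ∈ IsLocalRing.maximalIdeal A) :
    ∀ (M : Type _) [AddCommGroup M] [Module A M] [Module.Finite A M],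
      IsWeaklyRegular M rs → ∀ (c : Ideal A) (z : M), z ≠ 0 → (∀ s ∈ c, s • z = 0) →
      ∃ p : PrimeSpectrum A, c ≤ p.asIdeal ∧ (rs.length : ℕ∞) ≤ Order.coheight p := by
  induction rs with
  | nil =>
    intro M _ _ _ _ c z hz hc
    obtain ⟨p, hp, hcp⟩ := exists_le_isAssociatedPrime_of_isNoetherianRing A z hz
    exact ⟨⟨p, hp.isPrime⟩, fun s hs => hcp (by simpa [Submodule.mem_colon_singleton] using hc s hs),
      by simp⟩
  | cons x rs ih =>
    intro M _ _ _ hreg c z hz hc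
    rw [isWeaklyRegular_cons_iff] at hreg
    obtain ⟨p, hp, hcp⟩ := exists_le_isAssociatedPrime_of_isNoetherianRing A z hz
    rw [isAssociatedPrime_iff] at hp
    obtain ⟨hpp, w, hw⟩ := hp
    have hpw : ∀ s, s ∈ p ↔ s • w = 0 := fun s => by
      rw [hw, Submodule.mem_colon_singleton, Submodule.mem_bot]
    have hw0 : w ≠ 0 := fun h => hpp.ne_top ((Ideal.eq_top_iff_one _).2 ((hpw 1).2 (by simp [h])))
    have hxp : x ∉ p := fun h => hw0 (hreg.1 (by simpa using (hpw x).1 h))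
    have hxJ : Ideal.span {x} ≤ (⊥ : Ideal A).jacobson := by
      rw [IsLocalRing.jacobson_eq_maximalIdeal _ bot_ne_top, Ideal.span_singleton_le_iff_mem]
      exact hrs x (by simp)
    -- The submodule of elements killed by `p` is not contained in `x • M`, by Nakayama.
    obtain ⟨z', hz'p, hz'⟩ : ∃ z' : M, (∀ s ∈ p, s • z' = 0) ∧ ∀ m, x • m ≠ z' := by
      by_contra! hcon
      let N : Submodule A M := Submodule.torsionBySet A M (p : Set A)
      have hN : N = ⊥ := by
        refine Submodule.eq_bot_of_le_smul_of_le_jacobson_bot (Ideal.span {x}) N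
          (IsNoetherian.noetherian N) ?_ hxJ
        intro y hy
        have hy' : ∀ s ∈ p, s • y = 0 := fun s hs =>
          (Submodule.mem_torsionBySet_iff _ _).1 hy ⟨s, hs⟩
        obtain ⟨m, rfl⟩ := hcon y hy'
        refine Submodule.smul_mem_smul (Ideal.mem_span_singleton_self x) ?_
        refine (Submodule.mem_torsionBySet_iff _ _).2 fun s => ?_
        have := hy' s s.2
        rw [smul_comm] at this
        exact hreg.1 (by simpa using this)
      have : w ∈ N := (Submodule.mem_torsionBySet_iff _ _).2 fun s => (hpw s).1 s.2
      rw [hN] at this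
      exact hw0 this
    obtain ⟨p', hp', hcoh⟩ := ih (fun y hy => hrs y (by simp [hy])) (QuotSMulTop x M) hreg.2
      (p ⊔ Ideal.span {x}) (Submodule.Quotient.mk z')
      (fun h => by
        obtain ⟨m, hm⟩ := (quot_mk_eq_zero_iff x z').1 h
        exact hz' m hm)
      (fun s hs => by
        obtain ⟨a, ha, b, hb, rfl⟩ := Submodule.mem_sup.1 hs
        obtain ⟨t, rfl⟩ := Ideal.mem_span_singleton'.1 hb
        rw [← Submodule.Quotient.mk_smul, quot_mk_eq_zero_iff]
        exact ⟨t • z', by rw [add_smul, hz'p a ha, zero_add, smul_smul, mul_comm]⟩)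
    refine ⟨⟨p, hpp⟩, fun s hs => hcp (by simpa [Submodule.mem_colon_singleton] using hc s hs), ?_⟩
    have hlt : (⟨p, hpp⟩ : PrimeSpectrum A) < p' := by
      refine lt_of_le_of_ne (le_sup_left.trans hp') fun h => hxp ?_
      have : x ∈ p'.asIdeal := hp' (Ideal.mem_sup_right (Ideal.mem_span_singleton_self x))
      rwa [← h] at this
    calc ((x :: rs).length : ℕ∞) = rs.length + 1 := by simp
      _ ≤ Order.coheight p' + 1 := by gcongr
      _ ≤ _ := Order.coheight_add_one_le hlt

/-- There is an `A`-linear map `c → M` that is not multiplication by an element of `M`,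
i.e. `Ext¹(A ⧸ c, M) ≠ 0`. -/
def HasExt (c : Ideal A) (M : Type*) [AddCommGroup M] [Module A M] : Prop :=
  ∃ f : A →ₗ.[A] M, f.domain = c ∧ ¬∃ m : M, ∀ s : f.domain, f s = (s : A) • m

/-- The prime is an ideal maximal among those containing `c` with nonvanishing `Ext¹`. -/
theorem HasExt.exists_prime [IsNoetherianRing A] {c : Ideal A} (h : HasExt c M) :
    ∃ p : Ideal A, p.IsPrime ∧ c ≤ p ∧ HasExt p M := by
  obtain ⟨p, ⟨hcp, hp⟩, hmax⟩ := set_has_maximal_iff_noetherian.mpr ‹IsNoetherianRing A›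
    {c' | c ≤ c' ∧ HasExt c' M} ⟨c, le_rfl, h⟩
  refine ⟨p, ?_, hcp, hp⟩
  have hmax' : ∀ I, p < I → ¬ HasExt I M := fun I hI hE => hmax I ⟨hcp.trans hI.le, hE⟩ hI
  rw [Ideal.isPrime_iff]
  constructor
  · rintro rfl
    obtain ⟨f, hf, hn⟩ := hp
    have h1 : (1 : A) ∈ f.domain := hf ▸ Submodule.mem_top
    refine hn ⟨f ⟨1, h1⟩, fun s => ?_⟩
    rw [← LinearPMap.map_smul]
    congr 1
    ext
    simp
  · intro b a hba
    by_contra! hcon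
    obtain ⟨hb, ha⟩ := hcon
    obtain ⟨f, rfl, hn⟩ := hp
    -- The colon ideal `p : a` and the map `t ↦ f (t a)` on it.
    let I : Ideal A := f.domain.comap (LinearMap.mulRight A a)
    have hI : f.domain < I := by
      refine lt_of_le_of_ne (fun s hs => ?_) fun h => hb ?_
      · change s * a ∈ f.domain
        exact Ideal.mul_mem_right _ _ hs
      · rw [h]; exact hba
    obtain ⟨m, hm⟩ : ∃ m : M, ∀ t (ht : t * a ∈ f.domain), f ⟨t * a, ht⟩ = t • m := by
      by_contra hcon
      refine hmax' I hI ⟨⟨I, f.toFun.comp ((LinearMap.mulRight A a).restrict fun t ht => ht)⟩,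
        rfl, fun ⟨m, hm⟩ => hcon ⟨m, fun t ht => hm ⟨t, ht⟩⟩⟩
    let g : A →ₗ.[A] M := LinearPMap.mkSpanSingleton' a m fun t ht => by
      have ht' : t * a = 0 := ht
      have h0 : t * a ∈ f.domain := ht' ▸ f.domain.zero_mem
      change t • m = 0
      rw [← hm t h0]
      have : (⟨t * a, h0⟩ : f.domain) = 0 := Subtype.ext ht'
      rw [this, LinearPMap.map_zero]
    have hfg : ∀ (x : f.domain) (y : g.domain), (x : A) = y → f x = g y := by
      rintro ⟨x, hx⟩ ⟨y, hy⟩ hxy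
      obtain ⟨t, rfl⟩ := Submodule.mem_span_singleton.1 hy
      obtain rfl : x = t • a := hxy
      refine (hm t hx).trans ?_
      exact (LinearPMap.mkSpanSingleton'_apply (σ := RingHom.id A) a m _ t hy).symm
    have hlt : f.domain < (f.sup g hfg).domain := by
      refine lt_of_le_of_ne le_sup_left fun h => ha ?_
      rw [h]
      exact Submodule.mem_sup_right (Submodule.mem_span_singleton_self a)
    refine hmax' _ hlt ⟨f.sup g hfg, rfl, fun ⟨m', hm'⟩ => hn ⟨m', fun s => ?_⟩⟩
    exact ((LinearPMap.left_le_sup f g hfg).2 (y := ⟨s, hlt.le s.2⟩) rfl).trans (hm' ⟨s, hlt.le s.2⟩)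

/-- If `x` is regular on `M` and lies in the maximal ideal but not in the prime `p`, then
nonvanishing of `Ext¹(A ⧸ p, M)` is inherited by `Ext¹(A ⧸ (p + (x)), M ⧸ x M)`. -/
theorem HasExt.quotSMulTop [IsNoetherianRing A] [IsLocalRing A] [Module.Finite A M]
    {p : Ideal A} (hp : p.IsPrime) (h : HasExt p M) {x : A}
    (hx : x ∈ IsLocalRing.maximalIdeal A) (hxp : x ∉ p) (hreg : IsSMulRegular M x) :
    HasExt (p ⊔ Ideal.span {x}) (QuotSMulTop x M) := by
  by_contra hcon
  have hxJ : Ideal.span {x} ≤ (⊥ : Ideal A).jacobson := by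
    rwa [IsLocalRing.jacobson_eq_maximalIdeal _ bot_ne_top, Ideal.span_singleton_le_iff_mem]
  -- Every `φ : p → M` is a multiplication plus `x • φ'`.
  have key : ∀ φ : p →ₗ[A] M, ∃ (m : M) (φ' : p →ₗ[A] M), ∀ s : p, φ s = (s : A) • m + x • φ' s := by
    intro φ
    let f : A →ₗ.[A] QuotSMulTop x M := ⟨p, (Submodule.mkQ _).comp φ⟩
    let g : A →ₗ.[A] QuotSMulTop x M := ⟨Ideal.span {x}, 0⟩
    have hfg : ∀ (a : f.domain) (b : g.domain), (a : A) = b → f a = g b := by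
      rintro ⟨a, ha⟩ ⟨b, hb⟩ hab
      obtain ⟨t, rfl⟩ := Ideal.mem_span_singleton'.1 hb
      obtain rfl : a = t * x := hab
      have ht : t ∈ p := (hp.mem_or_mem ha).resolve_right hxp
      change (Submodule.Quotient.mk (φ ⟨t * x, ha⟩) : QuotSMulTop x M) = 0
      rw [quot_mk_eq_zero_iff]
      refine ⟨φ ⟨t, ht⟩, ?_⟩
      rw [← map_smul]
      congr 1
      ext
      simp [mul_comm]
    obtain ⟨m, hm⟩ : ∃ m : QuotSMulTop x M, ∀ s : (f.sup g hfg).domain,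
        f.sup g hfg s = (s : A) • m := by
      by_contra hc
      exact hcon ⟨f.sup g hfg, rfl, hc⟩
    obtain ⟨m, rfl⟩ := Submodule.Quotient.mk_surjective _ m
    have h1 : ∀ s : p, ∃ m', x • m' = φ s - (s : A) • m := by
      intro s
      rw [← quot_mk_eq_zero_iff, Submodule.Quotient.mk_sub, Submodule.Quotient.mk_smul, sub_eq_zero]
      have hs : (s : A) ∈ (f.sup g hfg).domain := (le_sup_left : p ≤ p ⊔ Ideal.span {x}) s.2
      exact ((LinearPMap.left_le_sup f g hfg).2 (x := s) (y := ⟨s, hs⟩) rfl).trans (hm ⟨s, hs⟩)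
    choose ψ hψ using h1
    refine ⟨m, ⟨⟨ψ, fun s t => ?_⟩, fun a s => ?_⟩, fun s => ?_⟩
    · apply hreg
      simp only [smul_add, hψ, map_add, Submodule.coe_add, add_smul]
      abel
    · apply hreg
      change x • ψ (a • s) = x • a • ψ s
      rw [smul_comm x a, hψ, hψ]
      simp only [map_smul, smul_sub, Submodule.coe_smul, smul_eq_mul, mul_smul]
    · change φ s = (s : A) • m + x • ψ s
      rw [hψ]
      abel
  let T : M →ₗ[A] (p →ₗ[A] M) :=
    { toFun := fun m => (LinearMap.toSpanSingleton A M m).comp p.subtype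
      map_add' := fun a b => by ext s; exact smul_add (s : A) a b
      map_smul' := fun a b => by ext s; exact smul_comm (s : A) a b }
  have htop : (⊤ : Submodule A (p →ₗ[A] M)) ≤ LinearMap.range T := by
    refine Submodule.le_of_le_smul_of_le_jacobson_bot (IsNoetherian.noetherian _) hxJ ?_
    intro φ _
    obtain ⟨m, φ', hφ⟩ := key φ
    have : φ = T m + x • φ' := by
      ext s
      rw [hφ]
      rfl
    rw [this]
    exact Submodule.add_mem_sup ⟨m, rfl⟩
      (Submodule.smul_mem_smul (Ideal.mem_span_singleton_self x) Submodule.mem_top)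
  obtain ⟨f, rfl, hn⟩ := h
  obtain ⟨m, hm⟩ := htop (Submodule.mem_top (x := f.toFun))
  exact hn ⟨m, fun s => by
    change f.toFun s = _
    rw [← hm]
    rfl⟩

/-- The case `i = 1` of Ischebeck's theorem: if `Ext¹(A ⧸ c, M) ≠ 0` then a weakly `M`-regular
sequence in the maximal ideal has length at most `dim (A ⧸ c) + 1`. -/
theorem HasExt.exists_coheight [IsNoetherianRing A] [IsLocalRing A] (rs : List A)
    (hrs : ∀ x ∈ rs, x ∈ IsLocalRing.maximalIdeal A) :
    ∀ (M : Type _) [AddCommGroup M] [Module A M] [Module.Finite A M],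
      IsWeaklyRegular M rs → ∀ (c : Ideal A), HasExt c M →
      ∃ p : PrimeSpectrum A, c ≤ p.asIdeal ∧ (rs.length : ℕ∞) ≤ Order.coheight p + 1 := by
  induction rs with
  | nil =>
    intro M _ _ _ _ c hc
    obtain ⟨p, hp, hcp, _⟩ := hc.exists_prime
    exact ⟨⟨p, hp⟩, hcp, by simp⟩
  | cons x rs ih =>
    intro M _ _ _ hreg c hc
    rw [isWeaklyRegular_cons_iff] at hreg
    obtain ⟨p, hp, hcp, hpE⟩ := hc.exists_prime
    have hrs' : ∀ y ∈ rs, y ∈ IsLocalRing.maximalIdeal A := fun y hy => hrs y (by simp [hy])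
    by_cases hxp : x ∈ p
    · obtain ⟨f, rfl, hn⟩ := hpE
      -- `f x` is not in `x • M`, and is killed by `p` modulo `x • M`.
      have hfx : ∀ s : f.domain, x • f s = (s : A) • f ⟨x, hxp⟩ := fun s => by
        rw [← LinearPMap.map_smul, ← LinearPMap.map_smul]
        congr 1
        ext
        simp [mul_comm]
      obtain ⟨p', hp', hcoh⟩ := exists_coheight_of_annihilated rs hrs' (QuotSMulTop x M) hreg.2
        f.domain (Submodule.Quotient.mk (f ⟨x, hxp⟩))
        (fun h => by
          obtain ⟨m, hm⟩ := (quot_mk_eq_zero_iff _ _).1 h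
          refine hn ⟨m, fun s => hreg.1 ?_⟩
          change x • f s = x • (s : A) • m
          rw [hfx, ← hm, smul_comm])
        (fun s hs => by
          rw [← Submodule.Quotient.mk_smul, quot_mk_eq_zero_iff]
          exact ⟨f ⟨s, hs⟩, hfx ⟨s, hs⟩⟩)
      exact ⟨p', hcp.trans hp', by simpa using add_le_add_left hcoh 1⟩
    · obtain ⟨p', hp', hcoh⟩ := ih hrs' (QuotSMulTop x M) hreg.2 _
        (hpE.quotSMulTop hp (hrs x (by simp)) hxp hreg.1)
      refine ⟨⟨p, hp⟩, hcp, ?_⟩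
      have hlt : (⟨p, hp⟩ : PrimeSpectrum A) < p' := by
        refine lt_of_le_of_ne (le_sup_left.trans hp') fun h => hxp ?_
        have : x ∈ p'.asIdeal := hp' (Ideal.mem_sup_right (Ideal.mem_span_singleton_self x))
        rwa [← h] at this
      calc ((x :: rs).length : ℕ∞) = rs.length + 1 := by simp
        _ ≤ Order.coheight p' + 1 + 1 := by gcongr
        _ ≤ _ := by gcongr; exact Order.coheight_add_one_le hlt

/-- In a local ring, a decomposition `a ⊓ b = ⊥` with `a`, `b` nonzero gives
`Ext¹(A ⧸ (a + b), A) ≠ 0`, via the projection `a ⊕ b → a`. -/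
theorem hasExt_sup [IsLocalRing A] {a b : Ideal A} (hab : a ⊓ b = ⊥) (ha : a ≠ ⊥) (hb : b ≠ ⊥) :
    HasExt (a ⊔ b) A := by
  let f : A →ₗ.[A] A := ⟨a, a.subtype⟩
  let g : A →ₗ.[A] A := ⟨b, 0⟩
  have hfg : ∀ (x : f.domain) (y : g.domain), (x : A) = y → f x = g y := by
    rintro ⟨x, hx⟩ ⟨y, hy⟩ (rfl : x = y)
    have : x ∈ a ⊓ b := ⟨hx, hy⟩
    rw [hab] at this
    exact this
  refine ⟨f.sup g hfg, rfl, fun ⟨m, hm⟩ => ?_⟩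
  have h1 : ∀ s ∈ a, s = s * m := fun s hs =>
    ((LinearPMap.left_le_sup f g hfg).2 (x := ⟨s, hs⟩)
      (y := ⟨s, (le_sup_left : a ≤ a ⊔ b) hs⟩) rfl).trans (hm _)
  have h2 : ∀ s ∈ b, 0 = s * m := fun s hs =>
    ((LinearPMap.right_le_sup f g hfg).2 (x := ⟨s, hs⟩)
      (y := ⟨s, (le_sup_right : b ≤ a ⊔ b) hs⟩) rfl).trans (hm _)
  rcases IsLocalRing.isUnit_or_isUnit_one_sub_self m with hu | hu
  · exact hb ((Submodule.eq_bot_iff _).2 fun s hs => hu.mul_left_eq_zero.1 (h2 s hs).symm)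
  · refine ha ((Submodule.eq_bot_iff _).2 fun s hs => hu.mul_left_eq_zero.1 ?_)
    rw [mul_sub, mul_one, ← h1 s hs, sub_self]

end LocalAlgebra

/-! ### Square-free monomial ideals -/

section SquareFree

variable {K : Type} [Field K] {σ : Type}

/-- The ideal of `K[X_i : i ∈ σ]` generated by the square-free monomials of degree `k` in the
variables satisfying `V`; both `Iq` and `Jr` are of this form. -/
noncomputable def sqFreeIdeal (K : Type) [Field K] {σ : Type} (V : σ → Prop) (k : ℕ) :
    Ideal (MvPolynomial σ K) :=
  Ideal.span {f | ∃ s : Finset σ, (∀ i ∈ s, V i) ∧ s.card = k ∧ f = ∏ i ∈ s, X i}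

theorem mem_sqFreeIdeal_iff {V : σ → Prop} {k : ℕ} {f : MvPolynomial σ K} :
    f ∈ sqFreeIdeal K V k ↔ ∀ e ∈ f.support, ∃ s : Finset σ, (∀ i ∈ s, V i) ∧ s.card = k ∧
      ∑ i ∈ s, Finsupp.single i 1 ≤ e := by
  have : {f : MvPolynomial σ K | ∃ s : Finset σ, (∀ i ∈ s, V i) ∧ s.card = k ∧ f = ∏ i ∈ s, X i} =
      (fun e => monomial e (1 : K)) '' {e | ∃ s : Finset σ, (∀ i ∈ s, V i) ∧ s.card = k ∧
        e = ∑ i ∈ s, Finsupp.single i 1} := by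
    ext f
    constructor
    · rintro ⟨s, h1, h2, rfl⟩
      exact ⟨_, ⟨s, h1, h2, rfl⟩, monomial_sum_one _ _⟩
    · rintro ⟨_, ⟨s, h1, h2, rfl⟩, rfl⟩
      exact ⟨s, h1, h2, monomial_sum_one _ _⟩
  rw [sqFreeIdeal, this, mem_ideal_span_monomial_image]
  refine forall₂_congr fun e _ => ?_
  constructor
  · rintro ⟨_, ⟨s, h1, h2, rfl⟩, h⟩
    exact ⟨s, h1, h2, h⟩
  · rintro ⟨s, h1, h2, h⟩
    exact ⟨_, ⟨s, h1, h2, rfl⟩, h⟩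

theorem prod_mem_sqFreeIdeal {V : σ → Prop} {k : ℕ} {s : Finset σ} (h : ∀ i ∈ s, V i)
    (hk : s.card = k) : (∏ i ∈ s, X i : MvPolynomial σ K) ∈ sqFreeIdeal K V k :=
  Ideal.subset_span ⟨s, h, hk, rfl⟩

/-- Square-free monomial ideals in disjoint sets of variables: intersection equals product. -/
theorem sqFreeIdeal_inf_le_mul {V W : σ → Prop} (hVW : ∀ i, V i → ¬ W i) (k l : ℕ) :
    sqFreeIdeal K V k ⊓ sqFreeIdeal K W l ≤ sqFreeIdeal K V k * sqFreeIdeal K W l := by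
  classical
  rintro f ⟨hV, hW⟩
  rw [SetLike.mem_coe, mem_sqFreeIdeal_iff] at hV hW
  rw [f.as_sum]
  refine Ideal.sum_mem _ fun e he => ?_
  obtain ⟨s, hs, hsk, hse⟩ := hV e he
  obtain ⟨t, ht, htl, hte⟩ := hW e he
  have hdisj : Disjoint s t := Finset.disjoint_left.2 fun i hi hi' => hVW i (hs i hi) (ht i hi')
  have hle : ∑ i ∈ s, Finsupp.single i 1 + ∑ i ∈ t, Finsupp.single i 1 ≤ e := by
    rw [← Finset.sum_union hdisj]
    intro i
    have h1 := hse i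
    have h2 := hte i
    simp only [Finsupp.finsetSum_apply, Finsupp.single_apply, Finset.sum_ite_eq',
      Finset.mem_union] at h1 h2 ⊢
    by_cases his : i ∈ s <;> by_cases hit : i ∈ t <;> simp_all
  have : monomial e (coeff e f) = (∏ i ∈ s, X i) * (∏ i ∈ t, X i) *
      monomial (e - (∑ i ∈ s, Finsupp.single i 1 + ∑ i ∈ t, Finsupp.single i 1)) (coeff e f) := by
    have h1 : (∏ i ∈ s, X i : MvPolynomial σ K) = monomial (∑ i ∈ s, Finsupp.single i 1) 1 :=
      (monomial_sum_one _ _).symm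
    have h2 : (∏ i ∈ t, X i : MvPolynomial σ K) = monomial (∑ i ∈ t, Finsupp.single i 1) 1 :=
      (monomial_sum_one _ _).symm
    rw [h1, h2, monomial_mul, monomial_mul, add_tsub_cancel_of_le hle]
    simp
  rw [this]
  exact Ideal.mul_mem_right _ _ (Ideal.mul_mem_mul (prod_mem_sqFreeIdeal hs hsk)
    (prod_mem_sqFreeIdeal ht htl))

open Classical in
/-- A prime containing all square-free monomials of degree `k` in the variables of `V` misses
fewer than `k` of these variables. -/
theorem card_lt_of_sqFreeIdeal_le [Fintype σ] {V : σ → Prop} {k : ℕ} {P : Ideal (MvPolynomial σ K)}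
    (hP : P.IsPrime) (h : sqFreeIdeal K V k ≤ P) :
    (Finset.univ.filter fun i => V i ∧ (X i : MvPolynomial σ K) ∉ P).card < k := by
  by_contra! hcon
  obtain ⟨s, hs, hk⟩ := Finset.exists_subset_card_eq hcon
  have hs' : ∀ i ∈ s, V i ∧ (X i : MvPolynomial σ K) ∉ P := fun i hi => by simpa using hs hi
  have := h (prod_mem_sqFreeIdeal (fun i hi => (hs' i hi).1) hk)
  obtain ⟨i, hi, hi'⟩ := hP.prod_mem_iff.1 this
  exact (hs' i hi).2 hi'

theorem span_range_X_eq_ker :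
    Ideal.span (Set.range X) = RingHom.ker (constantCoeff : MvPolynomial σ K →+* K) := by
  ext f
  rw [← Set.image_univ, mem_ideal_span_X_image, RingHom.mem_ker, constantCoeff_eq]
  constructor
  · intro h
    by_contra h0
    obtain ⟨i, -, hi⟩ := h 0 (mem_support_iff.2 h0)
    simp at hi
  · intro h e he
    by_contra! hcon
    have : e = 0 := by ext i; simpa using hcon i
    subst this
    exact mem_support_iff.1 he h

/-- The retraction of `K[X_i : i ∈ σ]` onto the polynomial ring in the variables of `V`, sending
all other variables to `0`. -/
noncomputable def killCompl' (K : Type) [Field K] {σ : Type} [DecidableEq σ] (V : Finset σ) :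
    MvPolynomial σ K →ₐ[K] MvPolynomial V K :=
  aeval fun i => if h : i ∈ V then X ⟨i, h⟩ else 0

variable [DecidableEq σ]

theorem killCompl'_X_of_mem {V : Finset σ} {i : σ} (h : i ∈ V) :
    killCompl' K V (X i) = X ⟨i, h⟩ := by
  simp [killCompl', h]

theorem killCompl'_X_of_notMem {V : Finset σ} {i : σ} (h : i ∉ V) :
    killCompl' K V (X i) = 0 := by
  simp [killCompl', h]

theorem killCompl'_surjective (V : Finset σ) : Function.Surjective (killCompl' K V) := by
  intro f
  refine ⟨rename (fun i : V => (i : σ)) f, ?_⟩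
  have : (killCompl' K V).comp (rename (fun i : V => (i : σ))) = AlgHom.id K _ := by
    ext i
    simp [killCompl'_X_of_mem i.2]
  exact DFunLike.congr_fun this f

theorem constantCoeff_killCompl' (V : Finset σ) (f : MvPolynomial σ K) :
    constantCoeff (killCompl' K V f) = constantCoeff f := by
  have : (constantCoeff (R := K)).comp (killCompl' K V).toRingHom = constantCoeff := by
    refine ringHom_ext (fun a => by simp) fun i => ?_
    by_cases h : i ∈ V
    · simp [killCompl'_X_of_mem h]
    · simp [killCompl'_X_of_notMem h]
  exact DFunLike.congr_fun this f

theorem sqFreeIdeal_le_ker {V : σ → Prop} {k : ℕ} {U : Finset σ}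
    (h : ∀ s : Finset σ, (∀ i ∈ s, V i) → s.card = k → ∃ i ∈ s, i ∉ U) :
    sqFreeIdeal K V k ≤ RingHom.ker (killCompl' K U) := by
  refine Ideal.span_le.2 ?_
  rintro f ⟨s, hs, hk, rfl⟩
  obtain ⟨i, his, hiU⟩ := h s hs hk
  rw [SetLike.mem_coe, RingHom.mem_ker, map_prod]
  exact Finset.prod_eq_zero his (killCompl'_X_of_notMem hiU)

/-- A coordinate subspace inside the zero locus of `L` bounds `dim S/L` from below. -/
theorem card_le_ringKrullDim_quotient {L : Ideal (MvPolynomial σ K)} {U : Finset σ}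
    (h : L ≤ RingHom.ker (killCompl' K U)) :
    ((U.card : ℕ) : WithBot ℕ∞) ≤ ringKrullDim (MvPolynomial σ K ⧸ L) := by
  have h1 := ringKrullDim_le_of_surjective
    (Ideal.Quotient.lift L (killCompl' K U).toRingHom fun a ha => h ha)
    (Ideal.Quotient.lift_surjective_of_surjective _ _ (killCompl'_surjective U))
  rw [MvPolynomial.ringKrullDim_of_isNoetherianRing, ringKrullDim_eq_zero_of_field, zero_add] at h1
  simpa using h1

variable [Fintype σ]

open Classical in
/-- The dimension of `S/P` is at most the number of variables outside the prime `P`. -/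
theorem coheight_le_card (P : PrimeSpectrum (MvPolynomial σ K)) :
    Order.coheight P ≤ (Finset.univ.filter fun i => (X i : MvPolynomial σ K) ∉ P.asIdeal).card := by
  set U := Finset.univ.filter fun i => (X i : MvPolynomial σ K) ∉ P.asIdeal with hU
  have h1 : (Order.coheight P : WithBot ℕ∞) = ringKrullDim (MvPolynomial σ K ⧸ P.asIdeal) := by
    rw [ringKrullDim_quotient, Order.coheight_eq_krullDim_Ici]
    have : Set.Ici P = PrimeSpectrum.zeroLocus (P.asIdeal : Set (MvPolynomial σ K)) := by
      ext Q
      simp [PrimeSpectrum.mem_zeroLocus, ← PrimeSpectrum.asIdeal_le_asIdeal]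
    rw [this]
  let g : MvPolynomial U K →ₐ[K] MvPolynomial σ K ⧸ P.asIdeal :=
    (Ideal.Quotient.mkₐ K P.asIdeal).comp (rename fun i : U => (i : σ))
  have hcomp : g.comp (killCompl' K U) = Ideal.Quotient.mkₐ K P.asIdeal := by
    ext i
    by_cases h : i ∈ U
    · simp [g, killCompl'_X_of_mem h]
    · have : (X i : MvPolynomial σ K) ∈ P.asIdeal := by simpa [hU] using h
      simpa [killCompl'_X_of_notMem h] using (Ideal.Quotient.eq_zero_iff_mem.2 this).symm
  have hsurj : Function.Surjective g := by
    intro y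
    obtain ⟨f, rfl⟩ := Ideal.Quotient.mk_surjective y
    exact ⟨killCompl' K U f, DFunLike.congr_fun hcomp f⟩
  have h2 := ringKrullDim_le_of_surjective g.toRingHom hsurj
  rw [MvPolynomial.ringKrullDim_of_isNoetherianRing, ringKrullDim_eq_zero_of_field, zero_add,
    ← h1] at h2
  have h3 : (Order.coheight P : WithBot ℕ∞) ≤ ((U.card : ℕ∞) : WithBot ℕ∞) := by
    simpa using h2
  exact_mod_cast h3

end SquareFree

/-! ### Regular sequences in quotients of a polynomial ring -/

section Depth

variable {K : Type} [Field K] {N : ℕ}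

theorem mk_mem_irrelevantMax {L : Ideal (MvPolynomial (Fin N) K)}
    (hL : L ≤ RingHom.ker (constantCoeff (R := K))) (f : MvPolynomial (Fin N) K) :
    Ideal.Quotient.mk L f ∈ irrelevantMax K N L ↔ constantCoeff f = 0 := by
  rw [irrelevantMax, span_range_X_eq_ker, Ideal.mem_quotient_iff_mem hL, RingHom.mem_ker]

theorem irrelevantMax_isMaximal {L : Ideal (MvPolynomial (Fin N) K)}
    (hL : L ≤ RingHom.ker (constantCoeff (R := K))) : (irrelevantMax K N L).IsMaximal := by
  have : irrelevantMax K N L = RingHom.ker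
      (Ideal.Quotient.lift L (constantCoeff (R := K)) fun a ha => RingHom.mem_ker.1 (hL ha)) := by
    ext f
    obtain ⟨f, rfl⟩ := Ideal.Quotient.mk_surjective f
    rw [mk_mem_irrelevantMax hL, RingHom.mem_ker, Ideal.Quotient.lift_mk]
  rw [this]
  refine RingHom.ker_isMaximal_of_surjective _
    (Ideal.Quotient.lift_surjective_of_surjective _ _ fun a => ⟨C a, by simp⟩)

open RingTheory.Sequence in
theorem IsRegularSeq.isWeaklyRegular {R : Type} [CommRing R] {l : List R} (h : IsRegularSeq R l) :
    IsWeaklyRegular R l := by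
  refine ⟨fun i hi => ?_⟩
  rw [isSMulRegular_quotient_iff_mem_of_smul_mem]
  intro y hy
  rw [smul_eq_mul, Ideal.mul_top] at hy ⊢
  exact h.1 i hi y hy

theorem comap_quot_localization_strictMono {S : Type} [CommRing S] (L : Ideal S) (m : Ideal (S ⧸ L))
    [m.IsPrime] : StrictMono (PrimeSpectrum.comap
      ((algebraMap (S ⧸ L) (Localization.AtPrime m)).comp (Ideal.Quotient.mk L))) := by
  refine Monotone.strictMono_of_injective (fun P Q h => Ideal.comap_mono h) ?_
  rw [PrimeSpectrum.comap_comp]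
  exact (PrimeSpectrum.comap_injective_of_surjective _ Ideal.Quotient.mk_surjective).comp
    (PrimeSpectrum.localization_comap_injective _ m.primeCompl)

theorem map_mem_maximalIdeal {R : Type} [CommRing R] (m : Ideal R) [m.IsPrime] {l : List R}
    (hl : ∀ x ∈ l, x ∈ m) : ∀ x ∈ l.map (algebraMap R (Localization.AtPrime m)),
      x ∈ IsLocalRing.maximalIdeal (Localization.AtPrime m) := by
  intro x hx
  obtain ⟨y, hy, rfl⟩ := List.mem_map.1 hx
  rw [IsLocalization.AtPrime.to_map_mem_maximal_iff _ m]
  exact hl y hy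

/-- Regular sequences in the irrelevant ideal are no longer than the dimension. -/
theorem length_le_ringKrullDim {L : Ideal (MvPolynomial (Fin N) K)}
    (hL : L ≤ RingHom.ker (constantCoeff (R := K))) {l : List (MvPolynomial (Fin N) K ⧸ L)}
    (hl : ∀ x ∈ l, x ∈ irrelevantMax K N L) (hreg : IsRegularSeq _ l) :
    ((l.length : ℕ∞) : WithBot ℕ∞) ≤ ringKrullDim (MvPolynomial (Fin N) K ⧸ L) := by
  have := irrelevantMax_isMaximal hL
  set m := irrelevantMax K N L
  let A := Localization.AtPrime m
  have : IsNoetherianRing A := IsLocalization.isNoetherianRing m.primeCompl A inferInstance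
  have hw := hreg.isWeaklyRegular.of_isLocalization A m.primeCompl
  obtain ⟨p, -, hp⟩ := exists_coheight_of_annihilated _ (map_mem_maximalIdeal m hl) A hw ⊥ 1
    one_ne_zero (by simp)
  rw [List.length_map] at hp
  have hmono : StrictMono (PrimeSpectrum.comap (algebraMap (MvPolynomial (Fin N) K ⧸ L) A)) :=
    Monotone.strictMono_of_injective (fun P Q h => Ideal.comap_mono h)
      (PrimeSpectrum.localization_comap_injective _ m.primeCompl)
  have h1 := hp.trans (Order.coheight_le_coheight_apply_of_strictMono _ hmono p)
  exact (WithBot.coe_le_coe.2 h1).trans (Order.coheight_le_krullDim _)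

/-- If `L = I ∩ J` and neither `I` nor `J` agrees with `L` near the origin, then a regular sequence
in the irrelevant ideal of `S/L` has length at most `dim (S/(I + J)) + 1`. -/
theorem exists_coheight_of_inf_le {L I J : Ideal (MvPolynomial (Fin N) K)}
    (hL : L ≤ RingHom.ker (constantCoeff (R := K))) (hLI : L ≤ I) (hLJ : L ≤ J) (hIJ : I ⊓ J ≤ L)
    (hI : ∃ f ∈ I, ∀ s, constantCoeff s ≠ 0 → s * f ∉ L)
    (hJ : ∃ f ∈ J, ∀ s, constantCoeff s ≠ 0 → s * f ∉ L)
    {l : List (MvPolynomial (Fin N) K ⧸ L)}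
    (hl : ∀ x ∈ l, x ∈ irrelevantMax K N L) (hreg : IsRegularSeq _ l) :
    ∃ P : PrimeSpectrum (MvPolynomial (Fin N) K), I ≤ P.asIdeal ∧ J ≤ P.asIdeal ∧
      (l.length : ℕ∞) ≤ Order.coheight P + 1 := by
  have := irrelevantMax_isMaximal hL
  set m := irrelevantMax K N L with hm
  let A := Localization.AtPrime m
  have : IsNoetherianRing A := IsLocalization.isNoetherianRing m.primeCompl A inferInstance
  have hw := hreg.isWeaklyRegular.of_isLocalization A m.primeCompl
  let φ := algebraMap (MvPolynomial (Fin N) K ⧸ L) A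
  let π := Ideal.Quotient.mk L
  have hinf : (I.map π).map φ ⊓ (J.map π).map φ = ⊥ := by
    rw [← IsLocalization.map_inf m.primeCompl A]
    have : I.map π ⊓ J.map π = ⊥ := by
      refine (Submodule.eq_bot_iff _).2 ?_
      rintro y ⟨h1, h2⟩
      obtain ⟨f, rfl⟩ := Ideal.Quotient.mk_surjective y
      exact Ideal.Quotient.eq_zero_iff_mem.2
        (hIJ ⟨(Ideal.mem_quotient_iff_mem hLI).1 h1, (Ideal.mem_quotient_iff_mem hLJ).1 h2⟩)
    rw [this, Ideal.map_bot]
  have hne : ∀ I' : Ideal (MvPolynomial (Fin N) K),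
      (∃ f ∈ I', ∀ s, constantCoeff s ≠ 0 → s * f ∉ L) → (I'.map π).map φ ≠ ⊥ := by
    rintro I' ⟨f, hf, hfs⟩ hbot
    have h0 : φ (π f) ∈ (I'.map π).map φ := Ideal.mem_map_of_mem _ (Ideal.mem_map_of_mem _ hf)
    rw [hbot, Ideal.mem_bot, IsLocalization.map_eq_zero_iff m.primeCompl] at h0
    obtain ⟨⟨c, hc⟩, h0⟩ := h0
    obtain ⟨s, rfl⟩ := Ideal.Quotient.mk_surjective c
    refine hfs s (fun h => hc ((mk_mem_irrelevantMax hL s).2 h)) ?_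
    rw [← Ideal.Quotient.eq_zero_iff_mem, map_mul]
    exact h0
  obtain ⟨p, hpc, hp⟩ := HasExt.exists_coheight _
    (map_mem_maximalIdeal m hl) A hw _ (hasExt_sup hinf (hne I hI) (hne J hJ))
  rw [List.length_map] at hp
  refine ⟨PrimeSpectrum.comap (φ.comp π) p, fun f hf => ?_, fun f hf => ?_, ?_⟩
  · exact hpc (Ideal.mem_sup_left (Ideal.mem_map_of_mem _ (Ideal.mem_map_of_mem _ hf)))
  · exact hpc (Ideal.mem_sup_right (Ideal.mem_map_of_mem _ (Ideal.mem_map_of_mem _ hf)))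
  · refine hp.trans ?_
    gcongr
    exact Order.coheight_le_coheight_apply_of_strictMono _
      (comap_quot_localization_strictMono L m) p

end Depth

/-! ### The hypersurface defined by the product of the variables -/

section Hypersurface

variable {K : Type} [Field K] {N : ℕ} [NeZero N]

/-- The endomorphism `X_j ↦ X_0` for `j ≤ k`, fixing the other variables. -/
noncomputable def collapse (K : Type) [Field K] (N : ℕ) [NeZero N] (k : ℕ) :
    MvPolynomial (Fin N) K →ₐ[K] MvPolynomial (Fin N) K :=
  aeval fun j => if (j : ℕ) ≤ k then X 0 else X j

/-- The ideal generated by `X_0 - X_j` for `j ≤ k`. -/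
noncomputable def diffIdeal (K : Type) [Field K] (N : ℕ) [NeZero N] (k : ℕ) :
    Ideal (MvPolynomial (Fin N) K) :=
  Ideal.span {f | ∃ j : Fin N, (j : ℕ) ≤ k ∧ f = X 0 - X j}

theorem diffIdeal_eq_ker (k : ℕ) : diffIdeal K N k = RingHom.ker (collapse K N k) := by
  apply le_antisymm
  · refine Ideal.span_le.2 ?_
    rintro f ⟨j, hj, rfl⟩
    simp [RingHom.mem_ker, collapse, hj]
  · intro f hf
    have hcomp : (Ideal.Quotient.mkₐ K (diffIdeal K N k)).comp (collapse K N k) =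
        Ideal.Quotient.mkₐ K (diffIdeal K N k) := by
      ext j
      by_cases hj : (j : ℕ) ≤ k
      · simp only [AlgHom.comp_apply, collapse, aeval_X, hj, if_true]
        exact Ideal.Quotient.eq.2 (Ideal.subset_span ⟨j, hj, rfl⟩)
      · simp [collapse, hj]
    have h1 := DFunLike.congr_fun hcomp f
    rw [AlgHom.comp_apply, (RingHom.mem_ker.1 hf), map_zero] at h1
    exact Ideal.Quotient.eq_zero_iff_mem.1 h1.symm

theorem diffIdeal_isPrime (k : ℕ) : (diffIdeal K N k).IsPrime := by
  rw [diffIdeal_eq_ker]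
  exact RingHom.ker_isPrime _

theorem diffIdeal_succ {k : ℕ} (hk : k + 1 < N) :
    diffIdeal K N (k + 1) = diffIdeal K N k ⊔ Ideal.span {X 0 - X ⟨k + 1, hk⟩} := by
  rw [diffIdeal, diffIdeal, ← Ideal.span_union]
  congr 1
  ext f
  constructor
  · rintro ⟨j, hj, rfl⟩
    rcases Nat.lt_or_eq_of_le hj with h | h
    · exact Or.inl ⟨j, by omega, rfl⟩
    · right
      obtain rfl : j = ⟨k + 1, hk⟩ := Fin.ext h
      rfl
  · rintro (⟨j, hj, rfl⟩ | rfl)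
    · exact ⟨j, by omega, rfl⟩
    · exact ⟨_, le_rfl, rfl⟩

theorem X_sub_X_notMem_diffIdeal {k : ℕ} (hk : k + 1 < N) :
    (X 0 - X ⟨k + 1, hk⟩ : MvPolynomial (Fin N) K) ∉ diffIdeal K N k := by
  rw [diffIdeal_eq_ker, RingHom.mem_ker]
  simp only [collapse, map_sub, aeval_X, Fin.val_zero, zero_le, if_true]
  rw [if_neg (by simp), sub_eq_zero]
  intro h
  have := X_injective h
  simp [Fin.ext_iff] at this

theorem prod_X_notMem_diffIdeal (k : ℕ) :
    (∏ j, X j : MvPolynomial (Fin N) K) ∉ diffIdeal K N k := by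
  rw [diffIdeal_eq_ker, RingHom.mem_ker, map_prod, Finset.prod_eq_zero_iff]
  rintro ⟨j, -, hj⟩
  simp only [collapse, aeval_X] at hj
  split_ifs at hj <;> exact X_ne_zero _ hj

/-- `X_0 - X_{k+1}` is a nonzerodivisor modulo `X_0 - X_1, …, X_0 - X_k` and `∏ X_j`: it generates
a prime ideal of the domain `S/(X_0 - X_1, …, X_0 - X_k)` which does not contain `∏ X_j`. -/
theorem mem_of_X_sub_X_mul_mem {k : ℕ} (hk : k + 1 < N) {y : MvPolynomial (Fin N) K}
    (h : (X 0 - X ⟨k + 1, hk⟩) * y ∈ diffIdeal K N k ⊔ Ideal.span {∏ j, X j}) :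
    y ∈ diffIdeal K N k ⊔ Ideal.span {∏ j, X j} := by
  obtain ⟨p, hp, b, hb, hpb⟩ := Submodule.mem_sup.1 h
  obtain ⟨z, rfl⟩ := Ideal.mem_span_singleton'.1 hb
  have h1 : z * ∏ j, X j ∈ diffIdeal K N (k + 1) := by
    have : z * ∏ j, X j = (X 0 - X ⟨k + 1, hk⟩) * y - p := by linear_combination hpb
    rw [this, diffIdeal_succ hk]
    exact Ideal.sub_mem _ (Ideal.mem_sup_right (Ideal.mul_mem_right _ _
      (Ideal.mem_span_singleton_self _))) (Ideal.mem_sup_left hp)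
  have h2 := ((diffIdeal_isPrime (k + 1)).mem_or_mem h1).resolve_right
    (prod_X_notMem_diffIdeal (k + 1))
  rw [diffIdeal_succ hk] at h2
  obtain ⟨p', hp', b', hb', rfl⟩ := Submodule.mem_sup.1 h2
  obtain ⟨w, rfl⟩ := Ideal.mem_span_singleton'.1 hb'
  have h3 : (X 0 - X ⟨k + 1, hk⟩) * (y - w * ∏ j, X j) ∈ diffIdeal K N k := by
    have : (X 0 - X ⟨k + 1, hk⟩) * (y - w * ∏ j, X j) = p + p' * ∏ j, X j := by
      linear_combination -hpb
    rw [this]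
    exact Ideal.add_mem _ hp (Ideal.mul_mem_right _ _ hp')
  have h4 := ((diffIdeal_isPrime k).mem_or_mem h3).resolve_left (X_sub_X_notMem_diffIdeal hk)
  rw [← sub_add_cancel y (w * ∏ j, X j)]
  exact Submodule.add_mem_sup h4 (Ideal.mul_mem_left _ _ (Ideal.mem_span_singleton_self _))

/-- The images of `X_0 - X_1, …, X_0 - X_{N-1}` form a regular sequence modulo `∏ X_j`. -/
theorem exists_isRegularSeq {L : Ideal (MvPolynomial (Fin N) K)} (hL : L = Ideal.span {∏ j, X j}) :
    ∃ l : List (MvPolynomial (Fin N) K ⧸ L), (∀ x ∈ l, x ∈ irrelevantMax K N L) ∧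
      IsRegularSeq _ l ∧ l.length = N - 1 := by
  have hLc : L ≤ RingHom.ker (constantCoeff (R := K)) := by
    rw [hL, Ideal.span_singleton_le_iff_mem, RingHom.mem_ker, map_prod]
    exact Finset.prod_eq_zero (Finset.mem_univ 0) (constantCoeff_X _ _)
  let l : List (MvPolynomial (Fin N) K ⧸ L) := List.ofFn fun i : Fin (N - 1) =>
    Ideal.Quotient.mk L (X 0 - X ⟨i + 1, by omega⟩)
  have hmem : ∀ x ∈ l, x ∈ irrelevantMax K N L := by
    intro x hx
    obtain ⟨i, rfl⟩ := List.mem_ofFn.1 hx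
    rw [mk_mem_irrelevantMax hLc]
    simp
  refine ⟨l, hmem, ⟨?_, ?_⟩, by simp [l]⟩
  · intro i hi y hy
    have hi' : i < N - 1 := by simpa [l] using hi
    have hspan : Ideal.span {x | x ∈ l.take i} = (diffIdeal K N i).map (Ideal.Quotient.mk L) := by
      rw [diffIdeal, Ideal.map_span]
      apply le_antisymm <;> rw [Ideal.span_le]
      · intro x hx
        obtain ⟨j, hj, rfl⟩ := List.mem_take_iff_getElem.1 hx
        have hj' : j < i := by omega
        refine Ideal.subset_span ⟨X 0 - X ⟨j + 1, by omega⟩, ⟨_, ?_, rfl⟩, by simp [l]⟩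
        exact hj'
      · rintro _ ⟨_, ⟨j, hj, rfl⟩, rfl⟩
        rcases Nat.eq_zero_or_pos (j : ℕ) with h0 | h0
        · obtain rfl : j = 0 := Fin.ext h0
          simp
        · refine Ideal.subset_span (List.mem_take_iff_getElem.2
            ⟨(j : ℕ) - 1, by simp [l]; omega, ?_⟩)
          simp only [l, List.getElem_ofFn]
          congr 3
          exact Fin.ext (Nat.sub_add_cancel h0)
    have hcomap : ∀ f, Ideal.Quotient.mk L f ∈ (diffIdeal K N i).map (Ideal.Quotient.mk L) ↔
        f ∈ diffIdeal K N i ⊔ Ideal.span {∏ j, X j} := by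
      intro f
      rw [← hL, ← Ideal.mem_comap, Ideal.comap_map_of_surjective _ Ideal.Quotient.mk_surjective,
        ← RingHom.ker_eq_comap_bot, Ideal.mk_ker]
    obtain ⟨f, rfl⟩ := Ideal.Quotient.mk_surjective y
    have hget : l.get ⟨i, hi⟩ = Ideal.Quotient.mk L (X 0 - X ⟨i + 1, by omega⟩) := by
      simp [l]
    rw [hspan, hget, ← map_mul, hcomap] at hy
    rw [hspan, hcomap]
    exact mem_of_X_sub_X_mul_mem _ hy
  · intro htop
    refine (irrelevantMax_isMaximal hLc).ne_top (top_le_iff.1 (htop ▸ Ideal.span_le.2 ?_))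
    exact hmem

end Hypersurface

/-! ### Dimension and depth of `S/(I_q J_r)` -/

section Main

variable {K : Type} [Field K] {n m : ℕ}

theorem card_filter_lt : (Finset.univ.filter fun i : Fin (n + m) => (i : ℕ) < n).card = n := by
  rw [Fin.card_filter_val_lt]
  omega

theorem card_filter_not_lt :
    (Finset.univ.filter fun i : Fin (n + m) => ¬ (i : ℕ) < n).card = m := by
  have := Finset.card_filter_add_card_filter_not (s := (Finset.univ : Finset (Fin (n + m))))
    (fun i => (i : ℕ) < n)
  rw [card_filter_lt, Finset.card_univ, Fintype.card_fin] at this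
  omega

/-- In top degree, a square-free monomial ideal is generated by the product of the
variables of `V`. -/
theorem sqFreeIdeal_card {σ : Type} [Fintype σ] (V : σ → Prop) [DecidablePred V] {k : ℕ}
    (hk : (Finset.univ.filter V).card = k) :
    sqFreeIdeal K V k = Ideal.span {∏ i ∈ Finset.univ.filter V, X i} := by
  rw [sqFreeIdeal]
  congr 1
  ext f
  constructor
  · rintro ⟨s, hs, hc, rfl⟩
    have hs' : s = Finset.univ.filter V :=
      Finset.eq_of_subset_of_card_le (fun i hi => by simpa using hs i hi) (by rw [hk, hc])
    rw [hs']
    rfl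
  · rintro rfl
    exact ⟨_, fun i hi => by simpa using hi, hk, rfl⟩

theorem Iq_eq (q : ℕ) : Iq K n m q = sqFreeIdeal K (fun i : Fin (n + m) => (i : ℕ) < n) q := rfl

theorem Jr_eq (r : ℕ) : Jr K n m r = sqFreeIdeal K (fun i : Fin (n + m) => ¬ (i : ℕ) < n) r := by
  simp only [Jr, sqFreeIdeal, not_lt]

theorem Iq_mul_Jr_eq : Iq K n m n * Jr K n m m = Ideal.span {∏ j, X j} := by
  have hI : Iq K n m n = _ := sqFreeIdeal_card (fun i : Fin (n + m) => (i : ℕ) < n) card_filter_lt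
  rw [hI, Jr_eq, sqFreeIdeal_card _ card_filter_not_lt, Ideal.span_singleton_mul_span_singleton,
    Finset.prod_filter_mul_prod_filter_not]

/-- The coordinate subspace on which the `x`-variables beyond the first `q - 1` vanish
lies in the zero locus of `I_q`. -/
theorem le_dim_x {q r : ℕ} (hq : 0 < q) (hqn : q ≤ n) : ((q - 1 + m : ℕ) : WithBot ℕ∞) ≤
    ringKrullDim (MvPolynomial (Fin (n + m)) K ⧸ (Iq K n m q * Jr K n m r)) := by
  set U := Finset.univ.filter fun i : Fin (n + m) => ¬ (q - 1 ≤ (i : ℕ) ∧ (i : ℕ) < n) with hU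
  have hc : q - 1 + m ≤ U.card := by
    have h1 := Finset.card_filter_add_card_filter_not (s := (Finset.univ : Finset (Fin (n + m))))
      (fun i => q - 1 ≤ (i : ℕ) ∧ (i : ℕ) < n)
    rw [Finset.card_univ, Fintype.card_fin, ← hU] at h1
    have h2 : ((Finset.univ.filter fun i : Fin (n + m) =>
        q - 1 ≤ (i : ℕ) ∧ (i : ℕ) < n).map Fin.valEmbedding).card ≤
        (Finset.Ico (q - 1) n).card := by
      refine Finset.card_le_card fun j hj => ?_
      obtain ⟨i, hi, rfl⟩ := Finset.mem_map.1 hj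
      simpa using hi
    rw [Finset.card_map, Nat.card_Ico] at h2
    omega
  have h : Iq K n m q ≤ RingHom.ker (killCompl' K U) := by
    refine sqFreeIdeal_le_ker (V := fun i : Fin (n + m) => (i : ℕ) < n) fun s hs hk => ?_
    by_contra! hcon
    have hsub : s ⊆ Finset.univ.filter fun i : Fin (n + m) => (i : ℕ) < q - 1 := fun i hi => by
      have h1 := hs i hi
      have h2 := hcon i hi
      simp only [hU, Finset.mem_filter, Finset.mem_univ, true_and] at h2 ⊢
      omega
    have := Finset.card_le_card hsub
    rw [Fin.card_filter_val_lt] at this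
    omega
  exact (Nat.cast_le.2 hc).trans (card_le_ringKrullDim_quotient (Ideal.mul_le_left.trans h))

/-- The coordinate subspace on which the `y`-variables beyond the first `r - 1` vanish
lies in the zero locus of `J_r`. -/
theorem le_dim_y {q r : ℕ} (hr : 0 < r) (hrm : r ≤ m) : ((n + (r - 1) : ℕ) : WithBot ℕ∞) ≤
    ringKrullDim (MvPolynomial (Fin (n + m)) K ⧸ (Iq K n m q * Jr K n m r)) := by
  set U := Finset.univ.filter fun i : Fin (n + m) => (i : ℕ) < n + (r - 1) with hU
  have hc : n + (r - 1) ≤ U.card := by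
    rw [hU, Fin.card_filter_val_lt]
    omega
  have h : Jr K n m r ≤ RingHom.ker (killCompl' K U) := by
    refine sqFreeIdeal_le_ker (V := fun i : Fin (n + m) => n ≤ (i : ℕ)) fun s hs hk => ?_
    by_contra! hcon
    have hsub : s.map Fin.valEmbedding ⊆ Finset.Ico n (n + (r - 1)) := fun j hj => by
      obtain ⟨i, hi, rfl⟩ := Finset.mem_map.1 hj
      have h1 := hs i hi
      have h2 := hcon i hi
      simp only [hU, Finset.mem_filter, Finset.mem_univ, true_and] at h2
      simp [h1, h2]
    have := Finset.card_le_card hsub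
    rw [Finset.card_map, Nat.card_Ico] at this
    omega
  exact (Nat.cast_le.2 hc).trans (card_le_ringKrullDim_quotient (Ideal.mul_le_right.trans h))

/-- A square-free monomial in the variables of `V` does not lie in a square-free monomial ideal in
variables disjoint from `V`, even locally at the origin. -/
theorem exists_notMem {σ : Type} [Fintype σ] [DecidableEq σ] {V W : σ → Prop} [DecidablePred V]
    (hVW : ∀ i, W i → ¬ V i) {k l : ℕ} (hk : k ≤ (Finset.univ.filter V).card) (hl : 0 < l) :
    ∃ f ∈ sqFreeIdeal K V k, ∀ s, constantCoeff s ≠ 0 → s * f ∉ sqFreeIdeal K W l := by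
  obtain ⟨t, ht, htk⟩ := Finset.exists_subset_card_eq hk
  refine ⟨_, prod_mem_sqFreeIdeal (fun i hi => by simpa using ht hi) htk, fun s hs hmem => ?_⟩
  have hker : sqFreeIdeal K W l ≤ RingHom.ker (killCompl' K (Finset.univ.filter V)) := by
    refine sqFreeIdeal_le_ker fun u hu hul => ?_
    obtain ⟨i, hi⟩ := Finset.card_pos.1 (hul ▸ hl)
    exact ⟨i, hi, by simpa using hVW i (hu i hi)⟩
  have h0 := RingHom.mem_ker.1 (hker hmem)
  rw [map_mul, mul_eq_zero, map_prod, Finset.prod_eq_zero_iff] at h0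
  rcases h0 with h0 | ⟨i, hi, h0⟩
  · apply hs
    rw [← constantCoeff_killCompl' (Finset.univ.filter V), h0, map_zero]
  · rw [killCompl'_X_of_mem (ht hi)] at h0
    exact X_ne_zero _ h0

theorem Iq_mul_Jr_le_ker {q r : ℕ} (hq : 0 < q) :
    Iq K n m q * Jr K n m r ≤ RingHom.ker (constantCoeff (R := K)) := by
  refine Ideal.mul_le_left.trans (Ideal.span_le.2 ?_)
  rintro f ⟨s, -, hs, rfl⟩
  obtain ⟨i, hi⟩ := Finset.card_pos.1 (hq.trans_eq hs.symm)
  rw [SetLike.mem_coe, RingHom.mem_ker, map_prod]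
  exact Finset.prod_eq_zero hi (constantCoeff_X _ _)

/-- The depth of `S/(I_q J_r)` is at most `q + r - 1 = dim (S/(I_q + J_r)) + 1`. -/
theorem ringDepth_le {q r : ℕ} (hq : 0 < q) (hqn : q ≤ n) (hr : 0 < r) (hrm : r ≤ m) :
    ringDepth _ (irrelevantMax K (n + m) (Iq K n m q * Jr K n m r)) ≤ (q + r - 1 : ℕ) := by
  classical
  refine sSup_le ?_
  rintro _ ⟨l, hl, hreg, rfl⟩
  have hI : ∃ f ∈ Iq K n m q, ∀ s, constantCoeff s ≠ 0 → s * f ∉ Iq K n m q * Jr K n m r := by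
    obtain ⟨f, hf, h⟩ := exists_notMem (K := K) (V := fun i : Fin (n + m) => (i : ℕ) < n)
      (W := fun i => ¬ (i : ℕ) < n) (fun _ => id) (k := q) (by rwa [card_filter_lt]) hr
    rw [← Jr_eq] at h
    rw [← Iq_eq] at hf
    exact ⟨f, hf, fun s hs hmem => h s hs (Ideal.mul_le_right hmem)⟩
  have hJ : ∃ f ∈ Jr K n m r, ∀ s, constantCoeff s ≠ 0 → s * f ∉ Iq K n m q * Jr K n m r := by
    obtain ⟨f, hf, h⟩ := exists_notMem (K := K) (V := fun i : Fin (n + m) => ¬ (i : ℕ) < n)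
      (W := fun i => (i : ℕ) < n) (fun _ => not_not_intro) (k := r)
      (by rwa [card_filter_not_lt]) hq
    rw [← Iq_eq] at h
    rw [← Jr_eq] at hf
    exact ⟨f, hf, fun s hs hmem => h s hs (Ideal.mul_le_left hmem)⟩
  have hinf : Iq K n m q ⊓ Jr K n m r ≤ Iq K n m q * Jr K n m r :=
    sqFreeIdeal_inf_le_mul (V := fun i : Fin (n + m) => (i : ℕ) < n)
      (W := fun i => n ≤ (i : ℕ)) (fun i h => not_le.2 h) q r
  obtain ⟨P, hPI, hPJ, hP⟩ := exists_coheight_of_inf_le (Iq_mul_Jr_le_ker hq) Ideal.mul_le_left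
    Ideal.mul_le_right hinf hI hJ hl hreg
  rw [Iq_eq] at hPI
  rw [Jr_eq] at hPJ
  have h1 := card_lt_of_sqFreeIdeal_le P.isPrime hPI
  have h2 := card_lt_of_sqFreeIdeal_le P.isPrime hPJ
  have h3 := coheight_le_card P
  have h4 : (Finset.univ.filter fun i => (X i : MvPolynomial (Fin (n + m)) K) ∉ P.asIdeal).card
      ≤ q - 1 + (r - 1) := by
    rw [← Finset.card_filter_add_card_filter_not (fun i : Fin (n + m) => (i : ℕ) < n),
      Finset.filter_filter, Finset.filter_filter]
    simp only [and_comm] at h1 h2 ⊢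
    refine add_le_add (Nat.le_sub_one_of_lt ?_) (Nat.le_sub_one_of_lt ?_)
    · convert h1
    · convert h2
  have h5 : Order.coheight P + 1 ≤ ((q - 1 + (r - 1) : ℕ) : ℕ∞) + 1 := by
    gcongr
    exact h3.trans (by exact_mod_cast h4)
  refine (hP.trans h5).trans ?_
  have : q - 1 + (r - 1) + 1 = q + r - 1 := by omega
  exact_mod_cast this.le

theorem ringKrullDim_top (hn : 0 < n) :
    ringKrullDim (MvPolynomial (Fin (n + m)) K ⧸ (Iq K n m n * Jr K n m m)) =
      ((m + n - 1 : ℕ) : WithBot ℕ∞) := by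
  classical
  apply le_antisymm
  · rw [ringKrullDim, Order.krullDim_eq_iSup_coheight]
    refine iSup_le fun p => WithBot.coe_le_coe.2 ?_
    let π := Ideal.Quotient.mk (Iq K n m n * Jr K n m m)
    have hmono : StrictMono (PrimeSpectrum.comap π) :=
      Monotone.strictMono_of_injective (fun P Q h => Ideal.comap_mono h)
        (PrimeSpectrum.comap_injective_of_surjective _ Ideal.Quotient.mk_surjective)
    refine (Order.coheight_le_coheight_apply_of_strictMono _ hmono p).trans
      ((coheight_le_card _).trans ?_)
    have hprod : (∏ j, X j : MvPolynomial (Fin (n + m)) K) ∈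
        (PrimeSpectrum.comap π p).asIdeal := by
      have h : (∏ j, X j : MvPolynomial (Fin (n + m)) K) ∈ Iq K n m n * Jr K n m m := by
        rw [Iq_mul_Jr_eq]
        exact Ideal.mem_span_singleton_self _
      rw [PrimeSpectrum.comap_asIdeal, Ideal.mem_comap, Ideal.Quotient.eq_zero_iff_mem.2 h]
      exact zero_mem _
    obtain ⟨i, -, hi⟩ := (PrimeSpectrum.comap π p).isPrime.prod_mem_iff.1 hprod
    have hlt := Finset.card_lt_univ_of_notMem (s := Finset.univ.filter fun j =>
      (X j : MvPolynomial (Fin (n + m)) K) ∉ (PrimeSpectrum.comap π p).asIdeal) (x := i)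
      (by simpa using hi)
    rw [Fintype.card_fin] at hlt
    exact Nat.cast_le.2 (by omega)
  · have := le_dim_x (K := K) (n := n) (m := m) (r := m) hn le_rfl
    rwa [show n - 1 + m = m + n - 1 by omega] at this

end Main

/-- Proposition 4.2(2): for `0 < q ≤ n`, `0 < r ≤ m`, `S/(I_q J_r)` is Cohen–Macaulay if
and only if `q = n` and `r = m`, in which case `dim S/(I_n J_m) = m + n - 1`. -/
theorem cm_IqJr (K : Type) [Field K] (n m q r : ℕ)
    (h0q : 0 < q) (hqn : q ≤ n) (h0r : 0 < r) (hrm : r ≤ m) :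
    (IsCohenMacaulay (MvPolynomial (Fin (n + m)) K ⧸ (Iq K n m q * Jr K n m r))
        (irrelevantMax K (n + m) (Iq K n m q * Jr K n m r)) ↔ q = n ∧ r = m) ∧
      ringKrullDim (MvPolynomial (Fin (n + m)) K ⧸ (Iq K n m n * Jr K n m m)) =
        ((m + n - 1 : ℕ) : WithBot ℕ∞) := by
  refine ⟨⟨fun h => ?_, ?_⟩, ringKrullDim_top (h0q.trans_le hqn)⟩
  · rw [IsCohenMacaulay] at h
    have h1 : ringKrullDim (MvPolynomial (Fin (n + m)) K ⧸ (Iq K n m q * Jr K n m r)) ≤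
        ((q + r - 1 : ℕ) : WithBot ℕ∞) := by
      rw [← h]
      exact WithBot.coe_le_coe.2 (ringDepth_le h0q hqn h0r hrm)
    have h2 : q - 1 + m ≤ q + r - 1 := Nat.cast_le.1 ((le_dim_x h0q hqn).trans h1)
    have h3 : n + (r - 1) ≤ q + r - 1 := Nat.cast_le.1 ((le_dim_y h0r hrm).trans h1)
    omega
  · rintro ⟨rfl, rfl⟩
    have : NeZero (q + r) := ⟨by omega⟩
    rw [IsCohenMacaulay]
    apply le_antisymm
    · rw [ringKrullDim_top h0q]
      refine WithBot.coe_le_coe.2 (sSup_le ?_)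
      rintro _ ⟨l, hl, hreg, rfl⟩
      have := length_le_ringKrullDim (Iq_mul_Jr_le_ker h0q) hl hreg
      rw [ringKrullDim_top h0q] at this
      exact WithBot.coe_le_coe.1 this
    · rw [ringKrullDim_top h0q]
      obtain ⟨l, hl, hreg, hlen⟩ := exists_isRegularSeq (K := K) (Iq_mul_Jr_eq (n := q) (m := r))
      refine WithBot.coe_le_coe.2 (le_sSup ⟨l, hl, hreg, ?_⟩)
      rw [hlen, add_comm]
end
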